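/- arXiv:2502.21062 — 2 statements merged into one kernel-verified Lean document; each statement's English description precedes it below -/
import Mathlib

section
/- There is a constant C > 0, depending only on ħ, such that for every integer N ≥ 2 with δ = 1/N, every t ∈ (0,1], and every grid point ζ = jδ (j ∈ ℤ), the average of the periodic heat kernel over the cell of width δ centered at ζ is close to its value at ζ: |δ⁻¹ ∫_{ζ−δ/2}^{ζ+δ/2} 𝔎^t(z) dz − 𝔎^t(ζ)| ≤ C·δ^{1/4}·t^{−3/4}. -/
/-!
The kernel is Hölder continuous of exponent `1/4` in space, with constant of order `t ^ (-3/4)`,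
and an average over a cell differs from the central value by at most the oscillation on the cell.

The Hölder bound is obtained mode by mode (`abs_mode_sub_le`). Since `cos` is bounded by `1` and
`1`-Lipschitz, `|cos a - cos b| ≤ 2 |a - b| ^ (1/4)`, so the `k`-th mode gains a factor
`|k| ^ (1/4)`. The Gaussian weight is bounded by `exp (-x) ≤ x ^ (-3/4)`, which yields
`t ^ (-3/4) |k| ^ (-3/2)`. The product is of order `|k| ^ (-5/4)`, which is summable over `ℤ`.
-/

open MeasureTheory intervalIntegral
open scoped Real

/-- The 1-periodic heat kernel `𝔎^t(z) = Σ_{k∈ℤ} exp(−4π²k²ħ²t) e^{2πikz}`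
(a real-valued function, written via cosines). -/
noncomputable def heatKernel (hbar t z : ℝ) : ℝ :=
  ∑' k : ℤ, Real.exp (-(4 * π ^ 2 * (k : ℝ) ^ 2 * hbar ^ 2 * t))
    * Real.cos (2 * π * (k : ℝ) * z)

lemma abs_cos_sub_cos_le_rpow (a b : ℝ) :
    |Real.cos a - Real.cos b| ≤ 2 * |a - b| ^ ((1 : ℝ) / 4) := by
  rcases le_total |a - b| 1 with h | h
  · have h1 : |Real.cos a - Real.cos b| ≤ |a - b| := by
      simpa [Real.dist_eq] using Real.lipschitzWith_cos.dist_le_mul a b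
    have h2 : |a - b| ≤ |a - b| ^ ((1 : ℝ) / 4) :=
      Real.self_le_rpow_of_le_one (abs_nonneg _) h (by norm_num)
    linarith [abs_nonneg (a - b)]
  · have h2 : 1 ≤ |a - b| ^ ((1 : ℝ) / 4) := Real.one_le_rpow h (by norm_num)
    have h1 : |Real.cos a - Real.cos b| ≤ 2 := by
      rw [abs_le]
      constructor <;>
        linarith [Real.cos_le_one a, Real.cos_le_one b, Real.neg_one_le_cos a,
          Real.neg_one_le_cos b]
    linarith

lemma exp_neg_le_rpow {x : ℝ} (hx : 0 < x) : Real.exp (-x) ≤ x ^ (-(3 : ℝ) / 4) := by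
  rw [neg_div, Real.rpow_neg hx.le, Real.exp_neg]
  apply inv_anti₀ (Real.rpow_pos_of_pos hx _)
  have h := Real.add_one_le_exp x
  rcases le_total x 1 with h1 | h1
  · linarith [Real.rpow_le_one hx.le h1 (show (0 : ℝ) ≤ 3 / 4 by norm_num)]
  · linarith [Real.rpow_le_self_of_one_le h1 (show (3 : ℝ) / 4 ≤ 1 by norm_num)]

/-- The weight bounds every mode, whatever the position `z`; its summability gives the uniform
convergence of the series defining the kernel. -/
lemma summable_weight {hbar t : ℝ} (hh : 0 < hbar) (ht : 0 < t) :
    Summable fun k : ℤ => Real.exp (-(4 * π ^ 2 * (k : ℝ) ^ 2 * hbar ^ 2 * t)) := by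
  have hs : Summable fun k : ℤ => (4 * π ^ 2 * hbar ^ 2 * t) ^ (-(3 : ℝ) / 4)
      * |(k : ℝ)| ^ (-(3 : ℝ) / 2) := by
    have := (Real.summable_abs_int_rpow (b := 3 / 2) (by norm_num)).mul_left
      ((4 * π ^ 2 * hbar ^ 2 * t) ^ (-(3 : ℝ) / 4))
    simpa [neg_div] using this
  refine hs.of_norm_bounded_eventually ?_
  -- The bound fails only for the zero mode, where the right-hand side vanishes.
  refine Filter.eventually_cofinite.2 ((Set.finite_singleton (0 : ℤ)).subset ?_)
  intro k hk
  by_contra hk0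
  apply hk
  have hk1 : 0 < |(k : ℝ)| := abs_pos.2 (by exact_mod_cast hk0)
  have hA : 0 < 4 * π ^ 2 * hbar ^ 2 * t := by positivity
  have h2 : 4 * π ^ 2 * (k : ℝ) ^ 2 * hbar ^ 2 * t
      = (4 * π ^ 2 * hbar ^ 2 * t) * |(k : ℝ)| ^ (2 : ℝ) := by
    rw [Real.rpow_two, sq_abs]; ring
  rw [Real.norm_eq_abs, Real.abs_exp, h2]
  refine (exp_neg_le_rpow (by positivity)).trans_eq ?_
  rw [Real.mul_rpow hA.le (by positivity), ← Real.rpow_mul hk1.le]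
  norm_num

lemma norm_mode_le (hbar t z : ℝ) (k : ℤ) :
    ‖Real.exp (-(4 * π ^ 2 * (k : ℝ) ^ 2 * hbar ^ 2 * t)) * Real.cos (2 * π * (k : ℝ) * z)‖
      ≤ Real.exp (-(4 * π ^ 2 * (k : ℝ) ^ 2 * hbar ^ 2 * t)) := by
  rw [norm_mul, Real.norm_eq_abs, Real.abs_exp]
  exact mul_le_of_le_one_right (Real.exp_pos _).le (Real.abs_cos_le_one _)

lemma continuous_heatKernel {hbar t : ℝ} (hh : 0 < hbar) (ht : 0 < t) :
    Continuous (heatKernel hbar t) :=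
  continuous_tsum (fun k => by fun_prop) (summable_weight hh ht)
    (fun k z => norm_mode_le hbar t z k)

/-- The Hölder bound for a single mode. At `k = 0` both sides vanish, by the convention
`0 ^ (-5/4) = 0`. -/
lemma abs_mode_sub_le {hbar t : ℝ} (hh : 0 < hbar) (ht : 0 < t) (z w : ℝ) (k : ℤ) :
    ‖Real.exp (-(4 * π ^ 2 * (k : ℝ) ^ 2 * hbar ^ 2 * t)) * Real.cos (2 * π * (k : ℝ) * z)
      - Real.exp (-(4 * π ^ 2 * (k : ℝ) ^ 2 * hbar ^ 2 * t)) * Real.cos (2 * π * (k : ℝ) * w)‖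
      ≤ (4 * π ^ 2 * hbar ^ 2) ^ (-(3 : ℝ) / 4) * t ^ (-(3 : ℝ) / 4)
        * (2 * ((2 * π) ^ ((1 : ℝ) / 4) * |z - w| ^ ((1 : ℝ) / 4)))
        * |(k : ℝ)| ^ (-(5 / 4 : ℝ)) := by
  rcases eq_or_ne k 0 with rfl | hk
  · simp
  have hk1 : 0 < |(k : ℝ)| := abs_pos.2 (by exact_mod_cast hk)
  have hA : 0 < 4 * π ^ 2 * hbar ^ 2 := by positivity
  have h2 : 4 * π ^ 2 * (k : ℝ) ^ 2 * hbar ^ 2 * t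
      = (4 * π ^ 2 * hbar ^ 2) * t * |(k : ℝ)| ^ (2 : ℝ) := by
    rw [Real.rpow_two, sq_abs]; ring
  have hexp : Real.exp (-(4 * π ^ 2 * (k : ℝ) ^ 2 * hbar ^ 2 * t))
      ≤ (4 * π ^ 2 * hbar ^ 2) ^ (-(3 : ℝ) / 4) * t ^ (-(3 : ℝ) / 4)
        * |(k : ℝ)| ^ (-(3 : ℝ) / 2) := by
    rw [h2]
    refine (exp_neg_le_rpow (by positivity)).trans_eq ?_
    rw [Real.mul_rpow (by positivity) (by positivity), Real.mul_rpow hA.le ht.le,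
      ← Real.rpow_mul hk1.le]
    norm_num
  have hcos := abs_cos_sub_cos_le_rpow (2 * π * (k : ℝ) * z) (2 * π * (k : ℝ) * w)
  have habs : |2 * π * (k : ℝ) * z - 2 * π * (k : ℝ) * w| = 2 * π * |z - w| * |(k : ℝ)| := by
    rw [← mul_sub, abs_mul, abs_mul, abs_of_pos Real.two_pi_pos]; ring
  rw [habs, Real.mul_rpow (by positivity) (by positivity),
    Real.mul_rpow (by positivity) (by positivity)] at hcos
  have hpow : |(k : ℝ)| ^ (-(5 / 4 : ℝ))
      = |(k : ℝ)| ^ (-(3 : ℝ) / 2) * |(k : ℝ)| ^ ((1 : ℝ) / 4) := by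
    rw [← Real.rpow_add hk1]; norm_num
  rw [← mul_sub, norm_mul, Real.norm_eq_abs, Real.abs_exp, Real.norm_eq_abs, hpow]
  refine (mul_le_mul hexp hcos (abs_nonneg _) (by positivity)).trans_eq ?_
  ring

/-- Spatial Hölder continuity of the kernel, of exponent `1/4`. -/
lemma abs_heatKernel_sub_le {hbar t : ℝ} (hh : 0 < hbar) (ht : 0 < t) (z w : ℝ) :
    |heatKernel hbar t z - heatKernel hbar t w|
      ≤ (4 * π ^ 2 * hbar ^ 2) ^ (-(3 : ℝ) / 4) * t ^ (-(3 : ℝ) / 4)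
        * (2 * ((2 * π) ^ ((1 : ℝ) / 4) * |z - w| ^ ((1 : ℝ) / 4)))
        * ∑' k : ℤ, |(k : ℝ)| ^ (-(5 / 4 : ℝ)) := by
  have hsum (x : ℝ) := (summable_weight hh ht).of_norm_bounded (fun k => norm_mode_le hbar t x k)
  have hs := Real.summable_abs_int_rpow (b := 5 / 4) (by norm_num)
  unfold heatKernel
  rw [← (hsum z).tsum_sub (hsum w), ← Real.norm_eq_abs]
  exact tsum_of_norm_bounded (hs.hasSum.mul_left _) (fun k => abs_mode_sub_le hh ht z w k)

/-- There is `C > 0`, depending only on `ħ`, such that for every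
`N ≥ 2` (`δ = 1/N`), every `t ∈ (0,1]`, and every grid point `ζ = jδ`:
`|δ⁻¹ ∫_{ζ−δ/2}^{ζ+δ/2} 𝔎^t(z) dz − 𝔎^t(ζ)| ≤ C δ^{1/4} t^{−3/4}`. -/
theorem heatKernel_cell_average_close (hbar : ℝ) (hhbar : 0 < hbar) :
    ∃ C : ℝ, 0 < C ∧
      ∀ N : ℕ, 2 ≤ N → ∀ t ∈ Set.Ioc (0 : ℝ) 1, ∀ j : ℤ,
        |(N : ℝ) * (∫ z in ((j : ℝ) / N - 1 / (2 * N))..((j : ℝ) / N + 1 / (2 * N)),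
            heatKernel hbar t z)
          - heatKernel hbar t ((j : ℝ) / N)|
        ≤ C * ((N : ℝ)⁻¹) ^ ((1 : ℝ) / 4) * t ^ (-(3 : ℝ) / 4) := by
  set S : ℝ := ∑' k : ℤ, |(k : ℝ)| ^ (-(5 / 4 : ℝ)) with hS
  have hS0 : 0 ≤ S := tsum_nonneg fun k => by positivity
  set A : ℝ := (4 * π ^ 2 * hbar ^ 2) ^ (-(3 : ℝ) / 4) * (2 * (2 * π) ^ ((1 : ℝ) / 4)) with hA
  have hA0 : 0 < A := by positivity
  refine ⟨A * (S + 1), by positivity, ?_⟩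
  intro N hN t ht j
  have ht0 : 0 < t := ht.1
  have hN0 : (0 : ℝ) < N := by exact_mod_cast (by omega : 0 < N)
  set ζ : ℝ := (j : ℝ) / N
  set r : ℝ := 1 / (2 * N) with hr
  have hr0 : 0 < r := by positivity
  have hNr : (N : ℝ) * (2 * r) = 1 := by rw [hr]; field_simp
  have hrN : r ≤ (N : ℝ)⁻¹ := by
    have : (N : ℝ)⁻¹ = 2 * r := by rw [hr]; field_simp
    linarith
  have hint : ∫ z in (ζ - r)..(ζ + r), (heatKernel hbar t z - heatKernel hbar t ζ)
      = (∫ z in (ζ - r)..(ζ + r), heatKernel hbar t z) - 2 * r * heatKernel hbar t ζ := by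
    rw [intervalIntegral.integral_sub ((continuous_heatKernel hhbar ht0).intervalIntegrable _ _)
      (by simp), intervalIntegral.integral_const, smul_eq_mul]
    ring
  have hbd : ‖∫ z in (ζ - r)..(ζ + r), (heatKernel hbar t z - heatKernel hbar t ζ)‖
      ≤ (A * (S + 1) * ((N : ℝ)⁻¹) ^ ((1 : ℝ) / 4) * t ^ (-(3 : ℝ) / 4))
        * |ζ + r - (ζ - r)| := by
    refine intervalIntegral.norm_integral_le_of_norm_le_const fun z hz => ?_
    rw [Set.uIoc_of_le (by linarith)] at hz
    have hz' : |z - ζ| ≤ (N : ℝ)⁻¹ :=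
      (abs_le.2 ⟨by linarith [hz.1], by linarith [hz.2]⟩ : |z - ζ| ≤ r).trans hrN
    calc ‖heatKernel hbar t z - heatKernel hbar t ζ‖
        ≤ A * S * |z - ζ| ^ ((1 : ℝ) / 4) * t ^ (-(3 : ℝ) / 4) := by
          refine (abs_heatKernel_sub_le hhbar ht0 z ζ).trans_eq ?_
          rw [hA, hS]; ring
      _ ≤ _ := by
          gcongr
          linarith
  have heq : (N : ℝ) * (∫ z in (ζ - r)..(ζ + r), heatKernel hbar t z) - heatKernel hbar t ζ
      = N * ∫ z in (ζ - r)..(ζ + r), (heatKernel hbar t z - heatKernel hbar t ζ) := by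
    rw [hint]
    linear_combination heatKernel hbar t ζ * hNr
  have hw : |ζ + r - (ζ - r)| = 2 * r := by
    rw [show ζ + r - (ζ - r) = 2 * r by ring, abs_of_pos (by positivity)]
  rw [heq, abs_mul, abs_of_pos hN0, ← Real.norm_eq_abs]
  rw [hw] at hbd
  refine (mul_le_mul_of_nonneg_left hbd hN0.le).trans_eq ?_
  linear_combination (A * (S + 1) * ((N : ℝ)⁻¹) ^ ((1 : ℝ) / 4) * t ^ (-(3 : ℝ) / 4)) * hNr
end

section
/- Let n : ℝ → ℝ be a 1-periodic continuous positive function such that √n is absolutely continuous with derivative (√n)' ∈ L²(0,1), and set F = ‖(√n)'‖_{L²(0,1)}. For an integer N ≥ 2 with δ = 1/N, define the cell averages n_δ : ℤ/Nℤ → ℝ by n_δ(j) = δ⁻¹ ∫_{jδ−δ/2}^{jδ+δ/2} n(x) dx. Then the discrete Fisher information of n_δ is controlled: δ Σ_{j∈ℤ/Nℤ} ( (√(n_δ(j+1)) − √(n_δ(j)))/δ )² ≤ 8 F². -/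
/-!
By the mean value theorem for integrals, the average of the continuous function `n` over a cell
equals `n ξ` for some point `ξ` of that cell. Hence the difference of the square roots of two
neighbouring averages is `√(n ξ') - √(n ξ) = ∫ x in ξ..ξ', g x`, where `ξ ≤ ξ'` lie in two adjacent
cells, so that `ξ' - ξ ≤ 2 / N`. Cauchy–Schwarz (`sq_intervalIntegral_le`) bounds its square by
`2 / N` times the integral of `g ^ 2` over the two cells. Summing over one period counts every
cell twice, which gives the bound with the constant `4`.
-/

open MeasureTheory intervalIntegral

/-- Cauchy–Schwarz against the constant function `1`, obtained by expanding
`0 ≤ ∫ (g - c) ^ 2` with `c` the mean of `g`. -/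
theorem sq_intervalIntegral_le {g : ℝ → ℝ} {a b : ℝ} (hab : a ≤ b)
    (hg : IntervalIntegrable g volume a b)
    (hg2 : IntervalIntegrable (fun x => g x ^ 2) volume a b) :
    (∫ x in a..b, g x) ^ 2 ≤ (b - a) * ∫ x in a..b, g x ^ 2 := by
  rcases hab.eq_or_lt with rfl | hlt
  · simp
  set c := (∫ x in a..b, g x) / (b - a) with hc
  have hpos : 0 < b - a := sub_pos.2 hlt
  have h0 : 0 ≤ ∫ x in a..b, (g x - c) ^ 2 :=
    integral_nonneg hab fun x _ => sq_nonneg _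
  have h1 : ∫ x in a..b, (g x - c) ^ 2
      = (∫ x in a..b, g x ^ 2) - 2 * c * (∫ x in a..b, g x) + (b - a) * c ^ 2 := by
    have : ∀ x, (g x - c) ^ 2 = g x ^ 2 - 2 * c * g x + c ^ 2 := fun x => by ring
    simp_rw [this]
    rw [integral_add (hg2.sub (hg.const_mul _)) intervalIntegrable_const,
      integral_sub hg2 (hg.const_mul _), intervalIntegral.integral_const_mul,
      intervalIntegral.integral_const, smul_eq_mul]
  have hI : ∫ x in a..b, g x = c * (b - a) := by rw [hc]; field_simp
  rw [h1, hI] at h0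
  rw [hI]
  nlinarith [mul_nonneg hpos.le h0]

/-- Mean value theorem for integrals. -/
theorem exists_eq_mean {f : ℝ → ℝ} (hf : Continuous f) {a b : ℝ} (hab : a < b) :
    ∃ ξ ∈ Set.Icc a b, ∫ x in a..b, f x = (b - a) * f ξ := by
  obtain ⟨ξ, hξ, h⟩ := exists_deriv_eq_slope (fun u => ∫ x in a..u, f x) hab
    (intervalIntegral.differentiable_integral_of_continuous hf).continuous.continuousOn
    (intervalIntegral.differentiable_integral_of_continuous hf).differentiableOn
  refine ⟨ξ, Set.Ioo_subset_Icc_self hξ, ?_⟩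
  have hpos : b - a ≠ 0 := (sub_pos.2 hab).ne'
  rw [hf.deriv_integral f a ξ, integral_same, sub_zero] at h
  rw [h]; field_simp

theorem sum_zmod_eq_sum_range (N : ℕ) [NeZero N] (f : ZMod N → ℝ) :
    ∑ j : ZMod N, f j = ∑ k ∈ Finset.range N, f (k : ZMod N) := by
  refine Finset.sum_nbij' (fun j => j.val) (fun k => (k : ZMod N)) ?_ ?_ ?_ ?_ ?_
  · intro j _; simpa using ZMod.val_lt j
  · intro k _; simp
  · intro j _; simp
  · intro k hk; exact ZMod.val_cast_of_lt (by simpa using hk)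
  · intro j _; simp

/-- **Discrete Fisher information bound.** For a 1-periodic continuous positive
`n` whose square root is absolutely continuous with derivative `g ∈ L²(0,1)`, the cell averages
`n_δ` on the grid of width `δ = 1/N` satisfy
`δ Σ_j ((√(n_δ(j+1)) − √(n_δ(j)))/δ)² ≤ 8 F²` with `F = ‖g‖_{L²(0,1)}`. -/
theorem discrete_fisher_bound (N : ℕ) (hN : 2 ≤ N) [NeZero N]
    (n : ℝ → ℝ) (hper : Function.Periodic n 1) (hcont : Continuous n)
    (hpos : ∀ x, 0 < n x)
    (g : ℝ → ℝ) (hgper : Function.Periodic g 1)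
    (hgint : IntervalIntegrable g MeasureTheory.volume 0 1)
    (hg2int : IntervalIntegrable (fun x => g x ^ 2) MeasureTheory.volume 0 1)
    (hAC : ∀ a b : ℝ, Real.sqrt (n b) - Real.sqrt (n a) = ∫ x in a..b, g x)
    (ndelta : ZMod N → ℝ)
    (hnd : ∀ j : ZMod N, ndelta j =
      (N : ℝ) * ∫ x in (((j.val : ℝ) / N) - 1 / (2 * N))..(((j.val : ℝ) / N) + 1 / (2 * N)), n x) :
    (N : ℝ)⁻¹ * ∑ j : ZMod N,
        ((Real.sqrt (ndelta (j + 1)) - Real.sqrt (ndelta j)) / (N : ℝ)⁻¹) ^ 2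
      ≤ 8 * ∫ x in (0 : ℝ)..1, g x ^ 2 := by
  have hN0 : (0 : ℝ) < N := by exact_mod_cast (by omega : 0 < N)
  have hg2per : Function.Periodic (fun x => g x ^ 2) 1 := fun x => by simp [hgper x]
  have hgi : ∀ a b, IntervalIntegrable g volume a b := fun a b =>
    hgper.intervalIntegrable₀ one_ne_zero hgint a b
  have hg2i : ∀ a b, IntervalIntegrable (fun x => g x ^ 2) volume a b := fun a b =>
    hg2per.intervalIntegrable₀ one_ne_zero hg2int a b
  -- `p k` is the left endpoint of the `k`-th cell.
  let p : ℕ → ℝ := fun k => (k : ℝ) / N - 1 / (2 * N)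
  have hstep : ∀ k, p (k + 1) = p k + 1 / N := fun k => by
    simp only [p]; push_cast; ring
  have hlt : ∀ k, p k < p (k + 1) := fun k => by
    rw [hstep]; linarith [one_div_pos.2 hN0]
  have hpN : ∀ k, p (k + N) = p k + 1 := fun k => by
    simp only [p]; push_cast; field_simp; ring
  have hright : ∀ k : ℕ, (k : ℝ) / N + 1 / (2 * N) = p (k + 1) := fun k => by
    simp only [p]; push_cast; field_simp; ring
  have hA : ∀ k ≤ N, ndelta (k : ZMod N) = N * ∫ x in p k..p (k + 1), n x := by
    intro k hk
    rcases hk.eq_or_lt with rfl | hk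
    -- The last cell is the translate by one period of the cell of index `0`.
    · rw [hnd, hright, ZMod.natCast_self, ZMod.val_zero]
      have h1 : p k = p 0 + 1 := by simpa using hpN 0
      have h2 : p (k + 1) = p (0 + 1) + 1 := by rw [← hpN, add_comm k 1]
      rw [h1, h2, ← intervalIntegral.integral_comp_add_right (f := n)]
      simp only [hper _]
      rfl
    · rw [hnd, hright, ZMod.val_cast_of_lt hk]
  have hmean : ∀ k ≤ N, ∃ ξ ∈ Set.Icc (p k) (p (k + 1)), ndelta (k : ZMod N) = n ξ := by
    intro k hk
    obtain ⟨ξ, hξ, h⟩ := exists_eq_mean hcont (hlt k)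
    refine ⟨ξ, hξ, ?_⟩
    rw [hA k hk, h, hstep]
    field_simp
    ring
  let G : ℕ → ℝ := fun k => ∫ x in p k..p (k + 1), g x ^ 2
  have hdiff : ∀ k < N, (√(ndelta ((k : ZMod N) + 1)) - √(ndelta (k : ZMod N))) ^ 2
      ≤ 2 / N * (G k + G (k + 1)) := by
    intro k hk
    obtain ⟨ξ, hξ, h⟩ := hmean k hk.le
    obtain ⟨η, hη, h'⟩ := hmean (k + 1) hk
    have hξη : ξ ≤ η := hξ.2.trans hη.1
    have hlen : η - ξ ≤ 2 / N := by
      have e : (2 : ℝ) / N = 1 / N + 1 / N := by ring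
      linarith [hξ.1, hη.2, hstep k, hstep (k + 1)]
    push_cast at h'
    rw [h, h', hAC]
    refine (sq_intervalIntegral_le hξη (hgi _ _) (hg2i _ _)).trans ?_
    have hGG : G k + G (k + 1) = ∫ x in p k..p (k + 1 + 1), g x ^ 2 :=
      integral_add_adjacent_intervals (hg2i _ _) (hg2i _ _)
    rw [hGG]
    refine mul_le_mul hlen ?_ (integral_nonneg hξη fun x _ => sq_nonneg _) (by positivity)
    exact integral_mono_interval hξ.1 hξη hη.2
      (Filter.Eventually.of_forall fun x => sq_nonneg (g x)) (hg2i _ _)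
  have hper_int : ∀ a : ℝ, ∫ x in a..a + 1, g x ^ 2 = ∫ x in (0 : ℝ)..1, g x ^ 2 := fun a => by
    simpa using hg2per.intervalIntegral_add_eq a 0
  have hG0 : ∑ k ∈ Finset.range N, G k = ∫ x in (0 : ℝ)..1, g x ^ 2 := by
    rw [sum_integral_adjacent_intervals fun k _ => hg2i _ _, ← hper_int (p 0), ← hpN, zero_add]
  have hG1 : ∑ k ∈ Finset.range N, G (k + 1) = ∫ x in (0 : ℝ)..1, g x ^ 2 := by
    have := sum_integral_adjacent_intervals (f := fun x => g x ^ 2) (a := fun k => p (k + 1))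
      (n := N) (μ := volume) fun k _ => hg2i _ _
    rw [this, ← hper_int (p (0 + 1)), ← hpN, zero_add, add_comm N 1]
  have hF : 0 ≤ ∫ x in (0 : ℝ)..1, g x ^ 2 := integral_nonneg zero_le_one fun x _ => sq_nonneg _
  rw [sum_zmod_eq_sum_range]
  have hsum : ∑ k ∈ Finset.range N,
      (√(ndelta ((k : ZMod N) + 1)) - √(ndelta (k : ZMod N))) ^ 2
      ≤ 2 / N * (2 * ∫ x in (0 : ℝ)..1, g x ^ 2) := by
    refine (Finset.sum_le_sum fun k hk => hdiff k (Finset.mem_range.1 hk)).trans_eq ?_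
    rw [← Finset.mul_sum, Finset.sum_add_distrib, hG0, hG1, two_mul (∫ x in (0 : ℝ)..1, g x ^ 2)]
  calc _ = N * ∑ k ∈ Finset.range N,
      (√(ndelta ((k : ZMod N) + 1)) - √(ndelta (k : ZMod N))) ^ 2 := by
        simp only [div_inv_eq_mul, mul_pow, ← Finset.sum_mul]
        field_simp
    _ ≤ N * (2 / N * (2 * ∫ x in (0 : ℝ)..1, g x ^ 2)) := by gcongr
    _ = 4 * ∫ x in (0 : ℝ)..1, g x ^ 2 := by field_simp; ring
    _ ≤ _ := by linarith
end
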